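/- For all integers n ≥ 1 and 0 ≤ t ≤ n, and any element x of a commutative ℚ-algebra: ∑_{m=0}^{t} C(n, m) · (n-m)! · ((-1)^{t-m}/(t-m)!) · (x-n+1)(x-n+2)···(x-n+m) · (2n-t)(2n-t-1)···(n+m-t+1) = n! · (2n-t)(2n-t-1)···(n+1) · (-1)^t · C(-x+2n-1, t), where C(y, t) denotes the generalized binomial coefficient y(y-1)···(y-t+1)/t!. -/

import Mathlib

/-- The generalized binomial coefficient `C(x, r) = x(x-1)⋯(x-r+1)/r!` of an element `x`
of a commutative ℚ-algebra. -/
noncomputable def gbinom {A : Type*} [CommRing A] [Algebra ℚ A] (x : A) (r : ℕ) : A :=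
  ((r.factorial : ℚ)⁻¹) • ∏ j ∈ Finset.range r, (x - j)

/-!
Both products in the `m`-th summand reduce to binomial coefficients:
`(x-n+1)⋯(x-n+m) = (-1)^m m! C(-(x-n+1), m)`, while `(2n-t)⋯(n+m-t+1)` splits as
`(2n-t)⋯(n+1)` times `n(n-1)⋯(n-(t-m)+1) = (t-m)! C(n, t-m)`. All factorials except `n!` cancel,
leaving the Chu–Vandermonde convolution `∑ C(-(x-n+1), m) C(n, t-m) = C(-x+2n-1, t)`.
-/

theorem descPochhammer_smeval_eq_prod_range {R : Type*} [CommRing R] (r : R) (k : ℕ) :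
    (descPochhammer ℤ k).smeval r = ∏ j ∈ Finset.range k, (r - j) := by
  rw [← Polynomial.aeval_eq_smeval, Polynomial.aeval_def, Polynomial.eval₂_eq_eval_map,
    descPochhammer_map, descPochhammer_eval_eq_prod_range]

theorem choose_mul_factorial_mul_factorial_mul_descFactorial {n t m : ℕ} (ht : t ≤ n) (hm : m ≤ t) :
    n.choose m * m.factorial * (n - m).factorial * (2 * n - t).descFactorial (n - m) =
      n.factorial * (2 * n - t).descFactorial (n - t) *
        ((t - m).factorial * n.choose (t - m)) := by
  have hsplit : n.descFactorial (t - m) * (2 * n - t).descFactorial (n - t) =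
      (2 * n - t).descFactorial (n - m) := by
    have h := Nat.descFactorial_mul_descFactorial (n := 2 * n - t) (Nat.sub_le_sub_left hm n)
    rwa [show 2 * n - t - (n - t) = n by lia, show n - m - (n - t) = t - m by lia] at h
  rw [Nat.choose_mul_factorial_mul_factorial (hm.trans ht), ← hsplit,
    ← Nat.descFactorial_eq_factorial_mul_choose]
  ring

section GeneralizedBinomial

variable {A : Type*} [CommRing A] [Algebra ℚ A]

variable (A) in
/-- The binomial ring structure of a commutative `ℚ`-algebra, which makes `Ring.choose` available
for `gbinom`. Mathlib's instance asks for a `ℚ≥0`-module, obtained here by restricting scalars. -/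
noncomputable abbrev binomialRingOfRatAlgebra : BinomialRing A :=
  letI : Module ℚ≥0 A := Module.compHom A (algebraMap ℚ≥0 ℚ)
  inferInstance

attribute [local instance] binomialRingOfRatAlgebra

theorem gbinom_eq_choose (x : A) (r : ℕ) : gbinom x r = Ring.choose x r := by
  rw [gbinom, inv_smul_eq_iff₀ (Nat.cast_ne_zero.2 r.factorial_ne_zero), Nat.cast_smul_eq_nsmul,
    ← Ring.descPochhammer_eq_factorial_smul_choose, descPochhammer_smeval_eq_prod_range]

theorem gbinom_natCast (n r : ℕ) : gbinom (n : A) r = n.choose r := by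
  rw [gbinom_eq_choose, Ring.choose_natCast]

theorem gbinom_add (x y : A) (r : ℕ) :
    gbinom (x + y) r = ∑ m ∈ Finset.range (r + 1), gbinom x m * gbinom y (r - m) := by
  simp only [gbinom_eq_choose, Ring.add_choose_eq r (Commute.all x y)]
  exact Finset.Nat.sum_antidiagonal_eq_sum_range_succ
    (fun i j => Ring.choose x i * Ring.choose y j) r

theorem factorial_mul_gbinom (x : A) (r : ℕ) :
    r.factorial * gbinom x r = ∏ j ∈ Finset.range r, (x - j) := by
  rw [gbinom_eq_choose, ← nsmul_eq_mul, ← Ring.descPochhammer_eq_factorial_smul_choose,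
    descPochhammer_smeval_eq_prod_range]

theorem prod_range_add_natCast_eq_gbinom_neg (x : A) (r : ℕ) :
    ∏ j ∈ Finset.range r, (x + j) = (-1) ^ r * (r.factorial * gbinom (-x) r) :=
  calc ∏ j ∈ Finset.range r, (x + j) = ∏ j ∈ Finset.range r, -(-x - j) := by
        simp only [neg_sub, sub_neg_eq_add, add_comm]
    _ = (-1) ^ r * (r.factorial * gbinom (-x) r) := by
        rw [Finset.prod_neg, Finset.card_range, factorial_mul_gbinom]

theorem smul_choose_mul_prod_mul_descFactorial {n t m : ℕ} (ht : t ≤ n) (hm : m ≤ t) (y : A) :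
    ((-1 : ℚ) ^ (t - m) * ((t - m).factorial : ℚ)⁻¹) •
        ((n.choose m : A) * ((n - m).factorial : A) *
          (∏ j ∈ Finset.range m, (y + ((j + 1 : ℕ) : A))) *
          ((2 * n - t).descFactorial (n - m) : A)) =
      (n.factorial : A) * ((2 * n - t).descFactorial (n - t) : A) * (-1) ^ t *
        (gbinom (-(y + 1)) m * gbinom (n : A) (t - m)) := by
  have hprod : ∏ j ∈ Finset.range m, (y + ((j + 1 : ℕ) : A)) =
      (-1) ^ m * (m.factorial * gbinom (-(y + 1)) m) := by
    rw [← prod_range_add_natCast_eq_gbinom_neg]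
    simp only [Nat.cast_add_one, add_assoc, add_comm (1 : A)]
  have hsign : (-1 : A) ^ (t - m) * (-1) ^ m = (-1) ^ t := by
    rw [← pow_add, Nat.sub_add_cancel hm]
  have hcoeff := congrArg (Nat.cast (R := A))
    (choose_mul_factorial_mul_factorial_mul_descFactorial ht hm)
  push_cast at hcoeff
  rw [mul_comm, mul_smul, inv_smul_eq_iff₀ (Nat.cast_ne_zero.2 (t - m).factorial_ne_zero),
    hprod, gbinom_natCast, ← hsign]
  simp only [Algebra.smul_def, map_pow, map_neg, map_one, map_natCast]
  linear_combination (-1) ^ (t - m) * (-1) ^ m * gbinom (-(y + 1)) m * hcoeff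

end GeneralizedBinomial

/-- `∑_{m=0}^{t} C(n,m)(n-m)! ((-1)^{t-m}/(t-m)!) (x-n+1)⋯(x-n+m) (2n-t)⋯(n+m-t+1)
  = n! (2n-t)⋯(n+1) (-1)^t C(-x+2n-1, t)`. -/
theorem stmt14 {A : Type*} [CommRing A] [Algebra ℚ A] (n t : ℕ)
    (hn : 1 ≤ n) (ht : t ≤ n) (x : A) :
    ∑ m ∈ Finset.range (t + 1),
        ((-1 : ℚ) ^ (t - m) * ((Nat.factorial (t - m) : ℚ))⁻¹) •
          ((Nat.choose n m : A) * (Nat.factorial (n - m) : A) *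
            (∏ j ∈ Finset.range m, (x - (n : A) + ((j + 1 : ℕ) : A))) *
            (Nat.descFactorial (2 * n - t) (n - m) : A)) =
      (Nat.factorial n : A) * (Nat.descFactorial (2 * n - t) (n - t) : A) * (-1 : A) ^ t *
        gbinom (-x + ((2 * n - 1 : ℕ) : A)) t := by
  have hx : -x + ((2 * n - 1 : ℕ) : A) = -(x - n + 1) + n := by
    rw [Nat.cast_pred (by lia)]
    push_cast
    ring
  rw [hx, gbinom_add, Finset.mul_sum]
  exact Finset.sum_congr rfl fun m hm =>
    smul_choose_mul_prod_mul_descFactorial ht (Finset.mem_range_succ_iff.1 hm) (x - n)
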